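/- Let R be a symmetric submodular set function on subsets of N = {1,…,n} with R(∅) = 0, and let r be its Lovász extension. Then for every x ∈ ℝ^n with ‖x‖_∞ ≤ 1, the minimum of r(δ) over all δ ∈ [0,1]^n with δ_i ≥ |x_i| for all i equals 0, and it is attained at any constant vector δ = c·(1,…,1) with ‖x‖_∞ ≤ c ≤ 1. -/

import Mathlib

/-- The sum `Σ_k x_{σ(k)} (R({σ(1),…,σ(k)}) - R({σ(1),…,σ(k-1)}))` defining the Lovász
extension of the set function `R` at `x`, computed with the ordering `σ`. -/
noncomputable def lovSum {n : ℕ} (R : Finset (Fin n) → ℝ) (x : Fin n → ℝ)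
    (σ : Equiv.Perm (Fin n)) : ℝ :=
  ∑ k : Fin n, x (σ k) * (R ((Finset.Iic k).image ⇑σ) - R ((Finset.Iio k).image ⇑σ))

/-!
Submodularity at `S` and `Sᶜ` together with symmetry gives `2 R(∅) ≤ 2 R(S)`, so `R` is minimal at
`∅` and at the whole ground set. Along an ordering sorting `x`, summation by parts bounds the
Lovász sum below by `c (R(N) - R(∅)) = 0`, where `c` is any lower bound of the coordinates. For a
constant vector the sum telescopes to `c (R(N) - R(∅))` exactly.
-/

section SymmetricSubmodular

variable {α G : Type*} [BooleanAlgebra α]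

lemma map_top_eq_map_bot_of_symmetric {f : α → G} (hsym : ∀ a, f a = f aᶜ) :
    f ⊤ = f ⊥ := by
  rw [hsym, compl_top]

lemma map_bot_le_of_symmetric_submodular [AddCommGroup G] [LinearOrder G] [IsOrderedAddMonoid G]
    {f : α → G} (hsub : ∀ a b, f (a ⊔ b) + f (a ⊓ b) ≤ f a + f b) (hsym : ∀ a, f a = f aᶜ)
    (a : α) : f ⊥ ≤ f a := by
  have hdouble : f ⊥ + f ⊥ ≤ f a + f a := by
    simpa only [sup_compl_eq_top, inf_compl_eq_bot, map_top_eq_map_bot_of_symmetric hsym,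
      ← hsym a] using hsub a aᶜ
  by_contra! hlt
  exact hdouble.not_gt (add_lt_add hlt hlt)

end SymmetricSubmodular

lemma mul_sub_le_sum_mul_sub_of_antitone {K : Type*} [Ring K] [PartialOrder K] [IsOrderedRing K]
    {n : ℕ} {a : Fin n → K} (ha : Antitone a) {F : ℕ → K} (hF : ∀ k, F 0 ≤ F k) {c : K}
    (hc : ∀ i, c ≤ a i) :
    c * (F n - F 0) ≤ ∑ k : Fin n, a k * (F (k + 1) - F k) := by
  induction n generalizing c with
  | zero => simp
  | succ n ih =>
    have hinit : a (Fin.last n) * (F n - F 0) ≤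
        ∑ k : Fin n, a k.castSucc * (F (k + 1) - F k) :=
      ih (ha.comp_monotone Fin.strictMono_castSucc.monotone) fun i => ha (Fin.le_last _)
    calc c * (F (n + 1) - F 0)
        ≤ a (Fin.last n) * (F (n + 1) - F 0) :=
          mul_le_mul_of_nonneg_right (hc _) (sub_nonneg.mpr (hF _))
      _ = a (Fin.last n) * (F n - F 0) + a (Fin.last n) * (F (n + 1) - F n) := by
          rw [← mul_add, sub_add_sub_cancel']
      _ ≤ ∑ k : Fin n, a k.castSucc * (F (k + 1) - F k) +
            a (Fin.last n) * (F (n + 1) - F n) := by gcongr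
      _ = ∑ k : Fin (n + 1), a k * (F (k + 1) - F k) := by simp [Fin.sum_univ_castSucc]

lemma exists_perm_antitone_comp {α : Type*} [LinearOrder α] {n : ℕ} (x : Fin n → α) :
    ∃ σ : Equiv.Perm (Fin n), Antitone (x ∘ σ) :=
  ⟨Tuple.sort (OrderDual.toDual ∘ x), Tuple.monotone_sort (OrderDual.toDual ∘ x)⟩

section PrefixSet

variable {α : Type*} [DecidableEq α] {n : ℕ}

/-- The set `{σ 0, …, σ (k - 1)}` of the first `k` entries of the tuple `σ`. The index `k` is a
natural number, so that sums of increments along the chain of prefixes telescope over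
`Finset.range`; for `k ≥ n` the prefix is the whole image of `σ`. -/
def prefixSet (σ : Fin n → α) (k : ℕ) : Finset α :=
  (Finset.univ.filter fun i : Fin n => (i : ℕ) < k).image σ

lemma prefixSet_zero (σ : Fin n → α) : prefixSet σ 0 = ∅ := by
  simp [prefixSet]

lemma prefixSet_length [Fintype α] {σ : Fin n → α} (hσ : σ.Surjective) :
    prefixSet σ n = Finset.univ := by
  simp [prefixSet, Finset.image_univ_of_surjective hσ]

lemma image_Iio_eq_prefixSet (σ : Fin n → α) (k : Fin n) :
    (Finset.Iio k).image σ = prefixSet σ k :=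
  congrArg (Finset.image σ) (by ext i; simp)

lemma image_Iic_eq_prefixSet (σ : Fin n → α) (k : Fin n) :
    (Finset.Iic k).image σ = prefixSet σ (k + 1) :=
  congrArg (Finset.image σ) (by ext i; simp)

end PrefixSet

section LovaszSum

variable {n : ℕ} (R : Finset (Fin n) → ℝ) (σ : Equiv.Perm (Fin n))

lemma lovSum_eq_sum_prefixSet (x : Fin n → ℝ) :
    lovSum R x σ = ∑ k : Fin n, x (σ k) * (R (prefixSet σ (k + 1)) - R (prefixSet σ k)) := by
  simp only [lovSum, image_Iic_eq_prefixSet, image_Iio_eq_prefixSet]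

lemma lovSum_const (c : ℝ) : lovSum R (fun _ => c) σ = c * (R Finset.univ - R ∅) := by
  rw [lovSum_eq_sum_prefixSet, ← Finset.mul_sum,
    Fin.sum_univ_eq_sum_range fun k => R (prefixSet σ (k + 1)) - R (prefixSet σ k),
    Finset.sum_range_sub fun k => R (prefixSet σ k), prefixSet_length σ.surjective,
    prefixSet_zero]

variable {R σ}

lemma mul_sub_le_lovSum (hR : ∀ S, R ∅ ≤ R S) {x : Fin n → ℝ} (hx : Antitone (x ∘ σ)) {c : ℝ}
    (hc : ∀ i, c ≤ x i) : c * (R Finset.univ - R ∅) ≤ lovSum R x σ := by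
  have h := mul_sub_le_sum_mul_sub_of_antitone hx (F := fun k => R (prefixSet σ k))
    (fun k => by simpa only [prefixSet_zero] using hR _) fun i => hc (σ i)
  simpa only [lovSum_eq_sum_prefixSet, Function.comp_apply, prefixSet_length σ.surjective,
    prefixSet_zero] using h

lemma lovSum_nonneg (hR : ∀ S, R ∅ ≤ R S) (huniv : R Finset.univ = R ∅) {x : Fin n → ℝ}
    (hx : Antitone (x ∘ σ)) : 0 ≤ lovSum R x σ := by
  obtain ⟨c, hc⟩ := (Set.finite_range x).bddBelow
  simpa only [huniv, sub_self, mul_zero] using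
    mul_sub_le_lovSum hR hx fun i => hc (Set.mem_range_self i)

end LovaszSum

theorem stmt_18_general (n : ℕ) (R : Finset (Fin n) → ℝ)
    (hsub : ∀ S T : Finset (Fin n), R (S ∪ T) + R (S ∩ T) ≤ R S + R T)
    (hsym : ∀ S : Finset (Fin n), R S = R Sᶜ)
    (r : (Fin n → ℝ) → ℝ)
    (hr : ∀ (x : Fin n → ℝ) (σ : Equiv.Perm (Fin n)),
      (∀ k l : Fin n, k ≤ l → x (σ l) ≤ x (σ k)) → r x = lovSum R x σ) :
    (∀ δ : Fin n → ℝ, 0 ≤ r δ) ∧ (∀ c : ℝ, r (fun _ => c) = 0) := by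
  have hmin : ∀ S, R ∅ ≤ R S := map_bot_le_of_symmetric_submodular hsub hsym
  have huniv : R Finset.univ = R ∅ := map_top_eq_map_bot_of_symmetric hsym
  refine ⟨fun δ => ?_, fun c => ?_⟩
  · obtain ⟨σ, hσ⟩ := exists_perm_antitone_comp δ
    rw [hr δ σ fun _ _ hkl => hσ hkl]
    exact lovSum_nonneg hmin huniv hσ
  · rw [hr _ 1 fun _ _ _ => le_rfl, lovSum_const, huniv, sub_self, mul_zero]

/-- **The convex envelope of `R(supp(·))` for symmetric submodular `R` vanishes.** Let `R`
be a symmetric submodular set function with `R(∅) = 0` and let `r` be its Lovász extension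
(i.e. `r x` equals the defining sum for every permutation sorting the coordinates of `x`
in nonincreasing order). For every `x` with `‖x‖_∞ ≤ 1`, the minimum of `r(δ)` over all
`δ ∈ [0,1]^n` with `δ ≥ |x|` coordinatewise equals `0`, attained at every constant vector
`δ = c·(1,…,1)` with `‖x‖_∞ ≤ c ≤ 1`. -/
theorem stmt_18 (n : ℕ) (R : Finset (Fin n) → ℝ) (hR0 : R ∅ = 0)
    (hsub : ∀ S T : Finset (Fin n), R (S ∪ T) + R (S ∩ T) ≤ R S + R T)
    (hsym : ∀ S : Finset (Fin n), R S = R Sᶜ)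
    (r : (Fin n → ℝ) → ℝ)
    (hr : ∀ (x : Fin n → ℝ) (σ : Equiv.Perm (Fin n)),
      (∀ k l : Fin n, k ≤ l → x (σ l) ≤ x (σ k)) → r x = lovSum R x σ)
    (x : Fin n → ℝ) (hx : ∀ i, |x i| ≤ 1) :
    (∀ δ : Fin n → ℝ, (∀ i, 0 ≤ δ i ∧ δ i ≤ 1) → (∀ i, |x i| ≤ δ i) → (0 : ℝ) ≤ r δ) ∧
    (∀ c : ℝ, (∀ i, |x i| ≤ c) → c ≤ 1 → r (fun _ => c) = 0) := by
  have h := stmt_18_general n R hsub hsym r hr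
  exact ⟨fun δ _ _ => h.1 δ, fun c _ _ => h.2 c⟩
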